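/- Assume the observability inequality from time intervals: there are constants d > 0 and k > 0 such that for every L ∈ (0,1] and every u₀ ∈ D, ‖S(L) u₀‖_X² ≤ e^{d / L^k} ∫_0^L ‖B S(t) u₀‖_U² dt. Let η ∈ (0,1). Then there exist constants C > 0 and θ ∈ (0,1) (depending only on d, k, C₀, b, η, M, α, but not on t₁, t₂ or u₀) with the following property: for all 0 ≤ t₁ < t₂ with t₂ - t₁ ≤ 1 and every Lebesgue-measurable set E ⊆ [t₁, t₂] with |E ∩ (t₁,t₂)| ≥ η (t₂ - t₁), every u₀ ∈ D satisfies, writing u(t) = S(t)u₀: ‖u(t₂)‖_X ≤ ( C e^{C/(t₂-t₁)^k} ∫_{t₁}^{t₂} χ_E(t) ‖B u(t)‖_U dt )^θ ‖u(t₁)‖_X^{1-θ}. -/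

import Mathlib

open MeasureTheory Set

/-!
The observed orbit `f t = B (S t x)` is analytic for `t > 0`: on `[a, 1]` it satisfies Cauchy
estimates `‖f⁽ⁿ⁾‖ ≤ K n! / ρⁿ` with `K` proportional to `‖x‖ / a` and `ρ` to `a`. On an interval
which is short compared with `ρ`, smallness of such an `f` therefore propagates from a subset `F` of
density `δ`: `F` contains `n + 1` nodes with gaps at least `δ / (n + 1)` times the length, and
Lagrange interpolation of the Taylor polynomial of degree `n` gives
`sup ‖f‖ ≤ (C / δ) ^ (n + 1) * sup_F ‖f‖ + K / 2 ^ (n + 1)`. Optimizing in `n` yields the Hölder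
bound `sup ‖f‖ ≤ 4 K ^ (1 - θ) * (sup_F ‖f‖) ^ θ`. By Markov's inequality, at least half of any set
may serve as `F` with `sup_F ‖f‖` at most twice the mean of `‖f‖` over that set.

By pigeonhole, some subinterval of length `c (t₂ - t₁)` at distance comparable to `t₂ - t₁` from
`t₁` meets `E` in a set of density `η / 2`. The bound above holds on it, and observability from that
subinterval together with the growth bound of the semigroup controls `‖u t₂‖`. The powers of
`1 / (t₂ - t₁)` lost on the way are absorbed in `e ^ (C / (t₂ - t₁) ^ k)`.
-/

section SeparatedNodes

open Polynomial
open scoped Nat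

theorem exists_nodes_add_le_succ {h : ℝ} (hh : 0 ≤ h) (n : ℕ) {F : Set ℝ} (hbdd : BddBelow F)
    (hfin : volume F ≠ ⊤) (hF : n * h < volume.real F) :
    ∃ t : ℕ → ℝ, (∀ i ≤ n, t i ∈ F) ∧ ∀ i < n, t i + h ≤ t (i + 1) := by
  have hne : F.Nonempty := by
    rw [nonempty_iff_ne_empty]
    rintro rfl
    rw [measureReal_empty] at hF
    exact hF.not_ge (by positivity)
  induction n generalizing F with
  | zero =>
    obtain ⟨x, hx⟩ := hne
    exact ⟨fun _ => x, fun _ _ => hx, by simp⟩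
  | succ n ih =>
    push_cast at hF
    obtain ⟨x, hxF, hx⟩ : ∃ x ∈ F, x < sInf F + (volume.real F - (n + 1) * h) :=
      exists_lt_of_csInf_lt hne (by linarith)
    have hcover : F ⊆ Icc (sInf F) (x + h) ∪ F ∩ Ici (x + h) := fun y hy =>
      (le_total y (x + h)).imp (fun hle => ⟨csInf_le hbdd hy, hle⟩) (fun hge => ⟨hy, hge⟩)
    have hrest_fin : volume (F ∩ Ici (x + h)) ≠ ⊤ := measure_ne_top_of_subset inter_subset_left hfin
    have hmeasure : volume.real F ≤ (x + h - sInf F) + volume.real (F ∩ Ici (x + h)) := calc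
      volume.real F ≤ volume.real (Icc (sInf F) (x + h) ∪ F ∩ Ici (x + h)) :=
        measureReal_mono hcover (measure_union_ne_top (by simp) hrest_fin)
      _ ≤ volume.real (Icc (sInf F) (x + h)) + volume.real (F ∩ Ici (x + h)) :=
        measureReal_union_le _ _
      _ = (x + h - sInf F) + volume.real (F ∩ Ici (x + h)) := by
        rw [Real.volume_real_Icc_of_le (by linarith [csInf_le hbdd hxF])]
    have hrest : n * h < volume.real (F ∩ Ici (x + h)) := by linarith
    have hrest_ne : (F ∩ Ici (x + h)).Nonempty :=
      nonempty_of_measureReal_ne_zero ((by positivity : 0 ≤ n * h).trans_lt hrest).ne'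
    obtain ⟨t, htF, hstep⟩ := ih (hbdd.mono inter_subset_left) hrest_fin hrest hrest_ne
    refine ⟨fun i => i.casesOn x t, ?_, ?_⟩
    · rintro (_ | i) hi
      · exact hxF
      · exact (htF i (by lia)).1
    · rintro (_ | i) hi
      · exact (htF 0 (by lia)).2
      · exact hstep i (by lia)

theorem abs_sub_mul_le_abs_sub_of_add_le_succ {h : ℝ} {n : ℕ} {t : ℕ → ℝ}
    (hstep : ∀ i < n, t i + h ≤ t (i + 1)) {i j : ℕ} (hi : i ≤ n) (hj : j ≤ n) :
    |(i : ℝ) - j| * h ≤ |t i - t j| := by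
  wlog hij : i ≤ j generalizing i j
  · rw [abs_sub_comm, abs_sub_comm (t i)]
    exact this hj hi (by lia)
  suffices hle : ((j : ℝ) - i) * h ≤ t j - t i by
    rw [abs_sub_comm, abs_of_nonneg (by simpa using hij), abs_sub_comm]
    exact hle.trans (le_abs_self _)
  induction j, hij using Nat.le_induction with
  | base => simp
  | succ j _ ih =>
    push_cast
    linarith [ih (by lia), hstep j (by lia)]

theorem prod_erase_range_abs_sub (i k : ℕ) :
    ∏ j ∈ (Finset.range (i + k + 1)).erase i, |(i : ℝ) - j| = i ! * k ! := by
  induction k with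
  | zero =>
    rw [add_zero, Finset.range_add_one, Finset.erase_insert Finset.notMem_range_self]
    calc ∏ j ∈ Finset.range i, |(i : ℝ) - j| = ∏ j ∈ Finset.range i, ((i - j : ℕ) : ℝ) :=
          Finset.prod_congr rfl fun j hj => by
            have hji : j ≤ i := (Finset.mem_range.1 hj).le
            rw [Nat.cast_sub hji, abs_of_nonneg (by simpa using hji)]
      _ = i ! * 0 ! := by
          rw [← Nat.cast_prod, ← Nat.descFactorial_eq_prod_range, Nat.descFactorial_self]
          simp
  | succ k ih =>
    rw [← add_assoc, Finset.range_add_one, Finset.erase_insert_of_ne (by lia),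
      Finset.prod_insert (by simp), ih, Nat.factorial_succ, abs_sub_comm, abs_of_nonneg]
    · push_cast
      ring
    · push_cast
      linarith [(Nat.cast_nonneg k : (0 : ℝ) ≤ k)]

variable {r h x : ℝ} {n : ℕ} {t : ℕ → ℝ}

theorem abs_eval_basis_le_of_separated (hh : 0 < h) (hx : ∀ i ≤ n, |x - t i| ≤ r)
    (hsep : ∀ i ≤ n, ∀ j ≤ n, |(i : ℝ) - j| * h ≤ |t i - t j|) {i : ℕ} (hi : i ≤ n) :
    |(Lagrange.basis (Finset.range (n + 1)) t i).eval x| ≤ (r / h) ^ n / n ! * n.choose i := by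
  obtain ⟨k, rfl⟩ := Nat.exists_eq_add_of_le hi
  have hfactor : ∀ j ∈ (Finset.range (i + k + 1)).erase i,
      |(Lagrange.basisDivisor (t i) (t j)).eval x| ≤ r / h * |(i : ℝ) - j|⁻¹ := fun j hj => by
    obtain ⟨hji, hj⟩ := Finset.mem_erase.1 hj
    have hjn : j ≤ i + k := Finset.mem_range_succ_iff.1 hj
    have hpos : 0 < |(i : ℝ) - j| := abs_pos.2 (sub_ne_zero.2 (by exact_mod_cast hji.symm))
    simp only [Lagrange.basisDivisor, eval_mul, eval_C, eval_sub, eval_X, abs_mul, abs_inv]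
    calc |t i - t j|⁻¹ * |x - t j| ≤ (|(i : ℝ) - j| * h)⁻¹ * r := by
          gcongr
          exacts [hsep i hi j hjn, hx j hjn]
      _ = r / h * |(i : ℝ) - j|⁻¹ := by ring
  calc |(Lagrange.basis (Finset.range (i + k + 1)) t i).eval x|
      ≤ ∏ j ∈ (Finset.range (i + k + 1)).erase i, (r / h * |(i : ℝ) - j|⁻¹) := by
        rw [Lagrange.basis, eval_prod, Finset.abs_prod]
        exact Finset.prod_le_prod (fun _ _ => abs_nonneg _) hfactor
    _ = (r / h) ^ (i + k) * (i ! * k ! : ℝ)⁻¹ := by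
        rw [Finset.prod_mul_distrib, Finset.prod_inv_distrib, prod_erase_range_abs_sub,
          Finset.prod_const, Finset.card_erase_of_mem (by simp), Finset.card_range,
          Nat.add_sub_cancel]
    _ = (r / h) ^ (i + k) / (i + k)! * (i + k).choose i := by
        rw [Nat.cast_add_choose]
        field_simp

theorem abs_eval_le_of_separated_nodes (hh : 0 < h) (hx : ∀ i ≤ n, |x - t i| ≤ r)
    (hsep : ∀ i ≤ n, ∀ j ≤ n, |(i : ℝ) - j| * h ≤ |t i - t j|) {p : ℝ[X]}
    (hdeg : p.degree < (n + 1 : ℕ)) {ε : ℝ} (hp : ∀ i ≤ n, |p.eval (t i)| ≤ ε) :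
    |p.eval x| ≤ (2 * r / h) ^ n / n ! * ε := by
  have hinj : InjOn t (Finset.range (n + 1)) := fun i hi j hj hij => by
    have hle := hsep i (by simpa using hi) j (by simpa using hj)
    rw [hij, sub_self, abs_zero] at hle
    have hzero : |(i : ℝ) - j| = 0 := (nonpos_of_mul_nonpos_left hle hh).antisymm (abs_nonneg _)
    exact_mod_cast sub_eq_zero.1 (abs_eq_zero.1 hzero)
  have hinterp : p.eval x = ∑ i ∈ Finset.range (n + 1),
      p.eval (t i) * (Lagrange.basis (Finset.range (n + 1)) t i).eval x := by
    conv_lhs => rw [Lagrange.eq_interpolate (f := p) hinj (by simpa using hdeg)]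
    simp [Lagrange.interpolate_apply, eval_finsetSum]
  calc |p.eval x|
      ≤ ∑ i ∈ Finset.range (n + 1), ε * ((r / h) ^ n / n ! * n.choose i) := by
        rw [hinterp]
        refine (Finset.abs_sum_le_sum_abs _ _).trans (Finset.sum_le_sum fun i hi => ?_)
        have hin : i ≤ n := Finset.mem_range_succ_iff.1 hi
        rw [abs_mul]
        exact mul_le_mul (hp i hin) (abs_eval_basis_le_of_separated hh hx hsep hin)
          (abs_nonneg _) ((abs_nonneg _).trans (hp i hin))
    _ = (2 * r / h) ^ n / n ! * ε := by
        rw [← Finset.mul_sum, ← Finset.mul_sum, ← Nat.cast_sum, Nat.sum_range_choose]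
        push_cast
        ring

theorem norm_taylorWithinEval_le_of_separated_nodes {E : Type*} [NormedAddCommGroup E]
    [NormedSpace ℝ E] (hh : 0 < h) (hx : ∀ i ≤ n, |x - t i| ≤ r)
    (hsep : ∀ i ≤ n, ∀ j ≤ n, |(i : ℝ) - j| * h ≤ |t i - t j|) {f : ℝ → E} {s : Set ℝ} {a ε : ℝ}
    (hf : ∀ i ≤ n, ‖taylorWithinEval f n s a (t i)‖ ≤ ε) :
    ‖taylorWithinEval f n s a x‖ ≤ (2 * r / h) ^ n / n ! * ε := by
  obtain ⟨ℓ, hℓ, hℓx⟩ := exists_dual_vector'' ℝ (taylorWithinEval f n s a x)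
  let p : ℝ[X] := ∑ k ∈ Finset.range (n + 1),
    ((k ! : ℝ)⁻¹ * ℓ (iteratedDerivWithin k f s a)) • (X - C a) ^ k
  have heval : ∀ y, p.eval y = ℓ (taylorWithinEval f n s a y) := fun y => by
    simp only [p, taylor_within_apply, map_sum, map_smul, eval_finsetSum, eval_smul, eval_C,
      eval_pow, eval_sub, eval_X, smul_eq_mul]
    exact Finset.sum_congr rfl fun k _ => by ring
  have hdeg : p.degree < (n + 1 : ℕ) := by
    refine (degree_sum_le _ _).trans_lt ?_
    refine (Finset.sup_lt_iff (WithBot.bot_lt_coe _)).2 fun k hk => ?_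
    refine (degree_smul_le _ _).trans_lt ((degree_pow_le_of_le k (degree_X_sub_C_le a)).trans_lt ?_)
    rw [mul_one]
    exact_mod_cast Finset.mem_range.1 hk
  have hnodes : ∀ i ≤ n, |p.eval (t i)| ≤ ε := fun i hi => by
    rw [heval]
    exact (ℓ.le_of_opNorm_le hℓ _).trans (by simpa using hf i hi)
  calc ‖taylorWithinEval f n s a x‖ = p.eval x := by rw [heval, hℓx]; rfl
    _ ≤ |p.eval x| := le_abs_self _
    _ ≤ (2 * r / h) ^ n / n ! * ε := abs_eval_le_of_separated_nodes hh hx hsep hdeg hnodes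

end SeparatedNodes

section PropagationOfSmallness

open scoped Nat ContDiff

/-- The Hölder exponent `θ` with which smallness on a subset of density `δ` propagates to the whole
interval: the solution of `(4 e / δ) ^ θ = 2`. -/
noncomputable def smallnessExponent (δ : ℝ) : ℝ := Real.logb (4 * Real.exp 1 / δ) 2

theorem two_lt_smallnessBase {δ : ℝ} (hδ : δ ∈ Ioc 0 1) : 2 < 4 * Real.exp 1 / δ := by
  rw [lt_div_iff₀ hδ.1]
  linarith [hδ.2, Real.add_one_lt_exp one_ne_zero]

theorem smallnessExponent_mem_Ioo {δ : ℝ} (hδ : δ ∈ Ioc 0 1) :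
    smallnessExponent δ ∈ Ioo (0 : ℝ) 1 := by
  have hbase := two_lt_smallnessBase hδ
  refine ⟨Real.logb_pos (by linarith) (by simp), ?_⟩
  rwa [smallnessExponent, Real.logb_lt_iff_lt_rpow (by linarith) two_pos, Real.rpow_one]

theorem rpow_smallnessExponent {δ : ℝ} (hδ : δ ∈ Ioc 0 1) :
    (4 * Real.exp 1 / δ) ^ smallnessExponent δ = 2 := by
  have hbase := two_lt_smallnessBase hδ
  exact Real.rpow_logb (by linarith) (by linarith) two_pos

theorem le_four_mul_rpow_mul_rpow {Λ θ x ε K : ℝ} (hΛ : 1 < 2 * Λ) (hθ : 0 < θ)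
    (hΛθ : (2 * Λ) ^ θ = 2) (hε : 0 ≤ ε) (hK : 0 ≤ K) (hxK : x ≤ K)
    (hx : ∀ n : ℕ, x ≤ Λ ^ n * ε + K * (1 / 2) ^ n) :
    x ≤ 4 * (K ^ (1 - θ) * ε ^ θ) := by
  rcases hε.eq_or_lt with rfl | hε
  · have hlim : Filter.Tendsto (fun n : ℕ => K * (1 / 2 : ℝ) ^ n) Filter.atTop (nhds 0) := by
      simpa using (tendsto_pow_atTop_nhds_zero_of_lt_one (r := (1 / 2 : ℝ)) (by norm_num)
        (by norm_num)).const_mul K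
    simpa [Real.zero_rpow hθ.ne'] using ge_of_tendsto' hlim fun n => by simpa using hx n
  rcases le_or_gt K ε with hKε | hKε
  · have hle : K ≤ K ^ (1 - θ) * ε ^ θ := calc
      K = K ^ (1 - θ) * K ^ θ := by
        rw [← Real.rpow_add' hK (by simp), sub_add_cancel, Real.rpow_one]
      _ ≤ K ^ (1 - θ) * ε ^ θ := by gcongr
    linarith
  have hK : 0 < K := hε.trans hKε
  obtain ⟨n, hn, hn'⟩ := exists_nat_pow_near ((one_le_div hε).2 hKε.le) hΛ
  have hbalance : Λ ^ n * ε ≤ K * (1 / 2) ^ n := by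
    rw [le_div_iff₀ hε, mul_pow] at hn
    rw [one_div, inv_pow, ← div_eq_mul_inv, le_div_iff₀ (by positivity)]
    linarith
  have hratio : (K / ε) ^ θ ≤ 2 ^ (n + 1) := calc
    (K / ε) ^ θ ≤ ((2 * Λ) ^ (n + 1)) ^ θ := by gcongr
    _ = ((2 * Λ) ^ θ) ^ (n + 1) := (Real.rpow_pow_comm (by linarith) θ (n + 1)).symm
    _ = 2 ^ (n + 1) := by rw [hΛθ]
  calc x ≤ 2 * (K * (1 / 2) ^ n) := by linarith [hx n]
    _ = 4 * (K / 2 ^ (n + 1)) := by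
        rw [one_div, inv_pow, pow_succ]
        field_simp
        norm_num
    _ ≤ 4 * (K / (K / ε) ^ θ) := by gcongr
    _ = 4 * (K ^ (1 - θ) * ε ^ θ) := by
        rw [Real.div_rpow hK.le hε.le, Real.rpow_sub hK, Real.rpow_one]
        field_simp

theorem measureReal_le_two_mul_measureReal_le_two_mul_setAverage {α : Type*} [MeasurableSpace α]
    {μ : Measure α} {s : Set α} (hs : MeasurableSet s) (hμ : μ s ≠ ⊤) {f : α → ℝ}
    (hf : IntegrableOn f s μ) (hf0 : 0 ≤ f) :
    μ.real s ≤ 2 * μ.real {x ∈ s | f x ≤ 2 * ⨍ y in s, f y ∂μ} := by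
  set m := ⨍ y in s, f y ∂μ with hm
  have hcover : s ⊆ {x ∈ s | f x ≤ 2 * m} ∪ s ∩ {x | 2 * m < f x} := fun x hx =>
    (le_or_gt (f x) (2 * m)).imp (fun hle => ⟨hx, hle⟩) (fun hgt => ⟨hx, hgt⟩)
  have hsplit : μ.real s ≤ μ.real {x ∈ s | f x ≤ 2 * m} + μ.real (s ∩ {x | 2 * m < f x}) :=
    (measureReal_mono hcover (measure_union_ne_top (measure_ne_top_of_subset (sep_subset _ _) hμ)
      (measure_ne_top_of_subset inter_subset_left hμ))).trans (measureReal_union_le _ _)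
  have hm0 : 0 ≤ m := by
    rw [hm, setAverage_eq]
    exact smul_nonneg (by positivity) (integral_nonneg hf0)
  suffices hbad : 2 * μ.real (s ∩ {x | 2 * m < f x}) ≤ μ.real s by linarith
  have h_int : ∫ y in s, f y ∂μ = μ.real s * m := (measure_smul_setAverage f hμ).symm
  rcases hm0.eq_or_lt with hm0 | hm0
  · have hzero : f =ᵐ[μ.restrict s] 0 := by
      rw [← setIntegral_eq_zero_iff_of_nonneg_ae (Filter.Eventually.of_forall hf0) hf, h_int, ← hm0,
        mul_zero]
    have hnull : μ.real (s ∩ {x | 2 * m < f x}) = 0 := by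
      rw [← hm0, measureReal_def, inter_comm, ← Measure.restrict_apply' hs]
      refine (ENNReal.toReal_eq_zero_iff _).2 (.inl (measure_mono_null ?_ hzero))
      intro x hx
      simpa using (show (0 : ℝ) < f x by simpa using hx).ne'
    simp [hnull]
  · have hmarkov : 2 * m * (μ.restrict s).real {x | 2 * m ≤ f x} ≤ μ.real s * m :=
      h_int ▸ mul_meas_ge_le_integral_of_nonneg (Filter.Eventually.of_forall hf0) hf (2 * m)
    have hle : μ.real (s ∩ {x | 2 * m < f x}) ≤ (μ.restrict s).real {x | 2 * m ≤ f x} := by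
      rw [measureReal_restrict_apply' hs, inter_comm]
      exact measureReal_mono (inter_subset_inter_left _ fun x (hx : 2 * m < f x) => hx.le)
        (measure_ne_top_of_subset inter_subset_right hμ)
    nlinarith

theorem pow_div_factorial_le_two_mul_exp_div_pow {δ : ℝ} (hδ : δ ∈ Ioc 0 1) (n : ℕ) :
    (2 * (n + 1) / δ) ^ n / n ! ≤ (2 * Real.exp 1 / δ) ^ (n + 1) := calc
  (2 * (n + 1) / δ) ^ n / n ! = (2 / δ) ^ n * ((n + 1) ^ n / n !) := by
      rw [← mul_div_assoc, ← mul_pow, div_mul_eq_mul_div]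
  _ ≤ (2 / δ) ^ (n + 1) * Real.exp (n + 1) := by
      have hδ0 : 0 < δ := hδ.1
      gcongr
      · exact (one_le_div hδ0).2 (by linarith [hδ.2])
      · exact n.le_succ
      · exact Real.pow_div_factorial_le_exp _ (by positivity) n
  _ = (2 * Real.exp 1 / δ) ^ (n + 1) := by
      rw [← Nat.cast_succ, ← Real.exp_one_pow, ← mul_pow, mul_div_right_comm]

theorem mul_pow_add_pow_le_one_half_pow {Λ q : ℝ} (hΛ : 1 ≤ Λ) (hq : 0 ≤ q) (hΛq : Λ * q ≤ 1 / 4)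
    (n : ℕ) : Λ ^ (n + 1) * q ^ (n + 1) + q ^ (n + 1) ≤ (1 / 2) ^ (n + 1) := by
  have hq4 : q ≤ 1 / 4 := (le_mul_of_one_le_left hq hΛ).trans hΛq
  calc Λ ^ (n + 1) * q ^ (n + 1) + q ^ (n + 1)
      ≤ (1 / 4) ^ (n + 1) + (1 / 4) ^ (n + 1) := by
        rw [← mul_pow]
        gcongr
    _ = 2 * (1 / 2) ^ (n + 1) * (1 / 2 : ℝ) ^ (n + 1) := by
        rw [mul_assoc, ← mul_pow]
        norm_num [two_mul]
    _ ≤ 1 * (1 / 2) ^ (n + 1) := by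
        gcongr
        rw [pow_succ]
        linarith [pow_le_one₀ (n := n) (by norm_num : (0 : ℝ) ≤ 1 / 2) (by norm_num)]
    _ = (1 / 2) ^ (n + 1) := one_mul _

variable {E : Type*} [NormedAddCommGroup E] [NormedSpace ℝ E]

/-- Quantitative analyticity of `f` on `s`: its derivatives grow like those of a function which is
holomorphic and bounded by `K` in the `ρ`-neighbourhood of `s`, as given by Cauchy's formula. -/
structure HasCauchyEstimatesOn (f : ℝ → E) (K ρ : ℝ) (s : Set ℝ) : Prop where
  contDiffOn : ContDiffOn ℝ ∞ f s
  norm_iteratedDerivWithin_le : ∀ n : ℕ, ∀ t ∈ s, ‖iteratedDerivWithin n f s t‖ ≤ K * n ! / ρ ^ n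

namespace HasCauchyEstimatesOn

variable {f : ℝ → E} {K ρ a b : ℝ}

theorem norm_le {s : Set ℝ} (hf : HasCauchyEstimatesOn f K ρ s) {t : ℝ} (ht : t ∈ s) :
    ‖f t‖ ≤ K := by
  simpa using hf.norm_iteratedDerivWithin_le 0 t ht

theorem norm_sub_taylorWithinEval_le (hf : HasCauchyEstimatesOn f K ρ (Icc a b)) (hρ : 0 < ρ)
    (n : ℕ) {x : ℝ} (hx : x ∈ Icc a b) :
    ‖f x - taylorWithinEval f n (Icc a b) a x‖ ≤ K * (2 * (b - a) / ρ) ^ (n + 1) := by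
  have hab : a ≤ b := hx.1.trans hx.2
  have hK : 0 ≤ K := (norm_nonneg _).trans (hf.norm_le hx)
  have hn : ((n + 1 : ℕ) : ℝ) ≤ 2 ^ (n + 1) := by exact_mod_cast Nat.lt_two_pow_self.le
  have hxa : 0 ≤ x - a := sub_nonneg.2 hx.1
  calc ‖f x - taylorWithinEval f n (Icc a b) a x‖
      ≤ K * (n + 1)! / ρ ^ (n + 1) * (x - a) ^ (n + 1) / n ! :=
        taylor_mean_remainder_bound hab (hf.contDiffOn.of_le (by exact_mod_cast le_top)) hx
          (hf.norm_iteratedDerivWithin_le (n + 1))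
    _ = K * ((n + 1 : ℕ) * ((x - a) / ρ) ^ (n + 1)) := by
        rw [Nat.factorial_succ, div_pow]
        push_cast
        field_simp
    _ ≤ K * (2 ^ (n + 1) * ((b - a) / ρ) ^ (n + 1)) := by
        gcongr
        exact hx.2
    _ = K * (2 * (b - a) / ρ) ^ (n + 1) := by rw [← mul_pow, mul_div_assoc]

variable {δ : ℝ}

theorem norm_le_pow_mul_add_of_norm_le_on (hf : HasCauchyEstimatesOn f K ρ (Icc a b))
    (hab : a < b) (hρ : 0 < ρ) (hδ : δ ∈ Ioc 0 1) (hlen : 16 * Real.exp 1 * (b - a) ≤ δ * ρ)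
    {F : Set ℝ} (hF : F ⊆ Icc a b) (hFδ : δ * (b - a) ≤ volume.real F) {ε : ℝ} (hε : 0 ≤ ε)
    (hfF : ∀ t ∈ F, ‖f t‖ ≤ ε) (n : ℕ) {x : ℝ} (hx : x ∈ Icc a b) :
    ‖f x‖ ≤ (2 * Real.exp 1 / δ) ^ (n + 1) * ε + K * (1 / 2) ^ (n + 1) := by
  have hδ0 : 0 < δ := hδ.1
  have hba : 0 < b - a := sub_pos.2 hab
  have hK : 0 ≤ K := (norm_nonneg _).trans (hf.norm_le hx)
  set Λ := 2 * Real.exp 1 / δ with hΛ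
  set q := 2 * (b - a) / ρ with hq
  set h := δ * (b - a) / (n + 1) with hh
  have hh0 : 0 < h := by positivity
  have hnh : n * h < volume.real F := by
    refine lt_of_lt_of_le ?_ hFδ
    rw [hh, mul_div_assoc', div_lt_iff₀ (by positivity)]
    linarith [mul_pos hδ0 hba]
  obtain ⟨t, htF, hstep⟩ := exists_nodes_add_le_succ hh0.le n (bddBelow_Icc.mono hF)
    (measure_ne_top_of_subset hF (by simp)) hnh
  have hdist : ∀ i ≤ n, |x - t i| ≤ b - a := fun i hi =>
    Real.dist_le_of_mem_Icc hx (hF (htF i hi))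
  have hnodes : ∀ i ≤ n, ‖taylorWithinEval f n (Icc a b) a (t i)‖ ≤ ε + K * q ^ (n + 1) :=
    fun i hi => by
      have hle := norm_sub_norm_le (taylorWithinEval f n (Icc a b) a (t i)) (f (t i))
      rw [norm_sub_rev] at hle
      linarith [hf.norm_sub_taylorWithinEval_le hρ n (hF (htF i hi)), hfF _ (htF i hi)]
  have hpoly : ‖taylorWithinEval f n (Icc a b) a x‖ ≤ Λ ^ (n + 1) * (ε + K * q ^ (n + 1)) := by
    refine (norm_taylorWithinEval_le_of_separated_nodes hh0 hdist
      (fun i hi j hj => abs_sub_mul_le_abs_sub_of_add_le_succ hstep hi hj) hnodes).trans ?_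
    have hspacing : 2 * (b - a) / h = 2 * (n + 1) / δ := by
      rw [hh]
      field_simp
    gcongr
    rw [hspacing]
    exact pow_div_factorial_le_two_mul_exp_div_pow hδ n
  have hΛq : Λ * q ≤ 1 / 4 := by
    rw [hΛ, hq, div_mul_div_comm, div_le_iff₀ (by positivity)]
    linarith
  have hΛ1 : 1 ≤ Λ := (one_le_div hδ0).2 (by linarith [Real.add_one_le_exp 1, hδ.2])
  have htail := mul_pow_add_pow_le_one_half_pow hΛ1 (by positivity : 0 ≤ q) hΛq n
  have hle := norm_le_norm_add_norm_sub' (f x) (taylorWithinEval f n (Icc a b) a x)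
  linarith [hf.norm_sub_taylorWithinEval_le hρ n hx, mul_le_mul_of_nonneg_left htail hK]

theorem norm_le_of_norm_le_on (hf : HasCauchyEstimatesOn f K ρ (Icc a b))
    (hab : a < b) (hρ : 0 < ρ) (hδ : δ ∈ Ioc 0 1) (hlen : 16 * Real.exp 1 * (b - a) ≤ δ * ρ)
    {F : Set ℝ} (hF : F ⊆ Icc a b) (hFδ : δ * (b - a) ≤ volume.real F) {ε : ℝ} (hε : 0 ≤ ε)
    (hfF : ∀ t ∈ F, ‖f t‖ ≤ ε) {x : ℝ} (hx : x ∈ Icc a b) :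
    ‖f x‖ ≤ 4 * (K ^ (1 - smallnessExponent δ) * ε ^ smallnessExponent δ) := by
  have hbase : 2 * (2 * Real.exp 1 / δ) = 4 * Real.exp 1 / δ := by ring
  have hfx : ‖f x‖ ≤ K := hf.norm_le hx
  refine le_four_mul_rpow_mul_rpow (Λ := 2 * Real.exp 1 / δ) ?_ (smallnessExponent_mem_Ioo hδ).1
    ?_ hε ((norm_nonneg _).trans hfx) hfx fun n => ?_
  · linarith [two_lt_smallnessBase hδ]
  · rw [hbase, rpow_smallnessExponent hδ]
  · cases n with
    | zero => simpa using hfx.trans (le_add_of_nonneg_left hε)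
    | succ n => exact hf.norm_le_pow_mul_add_of_norm_le_on hab hρ hδ hlen hF hFδ hε hfF n hx

theorem norm_le_of_setAverage (hf : HasCauchyEstimatesOn f K ρ (Icc a b))
    (hab : a < b) (hρ : 0 < ρ) (hδ : δ ∈ Ioc 0 1) (hlen : 32 * Real.exp 1 * (b - a) ≤ δ * ρ)
    {G : Set ℝ} (hGm : MeasurableSet G) (hG : G ⊆ Icc a b) (hGδ : δ * (b - a) ≤ volume.real G)
    {x : ℝ} (hx : x ∈ Icc a b) :
    ‖f x‖ ≤ 4 * (K ^ (1 - smallnessExponent (δ / 2)) *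
      (2 * ⨍ t in G, ‖f t‖) ^ smallnessExponent (δ / 2)) := by
  have h_int : IntegrableOn (fun t => ‖f t‖) G :=
    hf.contDiffOn.continuousOn.norm.integrableOn_Icc.mono_set hG
  have hmeasure := measureReal_le_two_mul_measureReal_le_two_mul_setAverage hGm
    (measure_ne_top_of_subset hG (by simp)) h_int fun t => norm_nonneg (f t)
  have haverage : 0 ≤ 2 * ⨍ t in G, ‖f t‖ := by
    rw [setAverage_eq]
    exact mul_nonneg zero_le_two (smul_nonneg (by positivity)
      (integral_nonneg fun _ => norm_nonneg _))
  exact hf.norm_le_of_norm_le_on hab hρ ⟨half_pos hδ.1, (half_le_self hδ.1.le).trans hδ.2⟩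
    (by linarith) ((sep_subset _ _).trans hG) (by linarith) haverage (fun t ht => ht.2) hx

end HasCauchyEstimatesOn

theorem exists_Icc_subset_measureReal_inter_ge {E : Set ℝ} {a l δ : ℝ} (hl : 0 ≤ l) {N : ℕ}
    (hN : 1 ≤ N) (hE : δ * (N * l) ≤ volume.real (E ∩ Icc a (a + N * l))) :
    ∃ c, a ≤ c ∧ c + l ≤ a + N * l ∧ δ * l ≤ volume.real (E ∩ Icc c (c + l)) := by
  induction N, hN using Nat.le_induction with
  | base => exact ⟨a, le_rfl, by simp, by simpa using hE⟩
  | succ N _ ih =>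
    have hend : a + (N + 1 : ℕ) * l = a + N * l + l := by
      push_cast
      ring
    rw [hend] at hE ⊢
    by_cases hlast : δ * l ≤ volume.real (E ∩ Icc (a + N * l) (a + N * l + l))
    · exact ⟨a + N * l, le_add_of_nonneg_right (by positivity), le_rfl, hlast⟩
    have hsplit : volume.real (E ∩ Icc a (a + N * l + l)) ≤
        volume.real (E ∩ Icc a (a + N * l)) +
          volume.real (E ∩ Icc (a + N * l) (a + N * l + l)) := by
      rw [← Icc_union_Icc_eq_Icc (le_add_of_nonneg_right (by positivity : 0 ≤ N * l))
        (le_add_of_nonneg_right hl), inter_union_distrib_left]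
      exact measureReal_union_le _ _
    push_cast at hE
    obtain ⟨c, hac, hc, hdense⟩ := ih (by linarith)
    exact ⟨c, hac, by linarith, hdense⟩

theorem exists_pos_le_forall_exists_Icc_measureReal_inter_ge {η κ : ℝ} (hη : η ∈ Ioo 0 1)
    (hκ : 0 < κ) :
    ∃ c ∈ Ioc 0 κ, ∀ L : ℝ, 0 ≤ L → ∀ E : Set ℝ, η * L ≤ volume.real (E ∩ Ioc 0 L) →
      ∃ a, η / 2 * L ≤ a ∧ a + c * L ≤ L ∧
        η / 2 * (c * L) ≤ volume.real (E ∩ Icc a (a + c * L)) := by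
  obtain ⟨hη0, hη1⟩ := hη
  have hN : 0 < ⌈κ⁻¹⌉₊ := Nat.ceil_pos.2 (inv_pos.2 hκ)
  set N := ⌈κ⁻¹⌉₊
  have hNκ : (N : ℝ)⁻¹ ≤ κ := inv_le_of_inv_le₀ hκ (Nat.le_ceil _)
  have hη2 : 0 < 1 - η / 2 := by linarith
  refine ⟨(1 - η / 2) / N, ⟨by positivity, ?_⟩, fun L hL E hE => ?_⟩
  · exact (mul_le_of_le_one_left (by positivity) (by linarith)).trans hNκ
  have hcover : E ∩ Ioc 0 L ⊆ Icc 0 (η / 2 * L) ∪ E ∩ Icc (η / 2 * L) L :=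
    fun t ⟨htE, ht⟩ => (le_total t (η / 2 * L)).imp (fun hle => ⟨ht.1.le, hle⟩)
      fun hge => ⟨htE, hge, ht.2⟩
  have hrest : η / 2 * L ≤ volume.real (E ∩ Icc (η / 2 * L) L) := by
    have hle : volume.real (E ∩ Ioc 0 L) ≤ η / 2 * L + volume.real (E ∩ Icc (η / 2 * L) L) := calc
      volume.real (E ∩ Ioc 0 L) ≤ volume.real (Icc 0 (η / 2 * L) ∪ E ∩ Icc (η / 2 * L) L) :=
        measureReal_mono hcover (measure_union_ne_top (by simp)
          (measure_ne_top_of_subset inter_subset_right (by simp)))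
      _ ≤ _ := measureReal_union_le _ _
      _ = η / 2 * L + volume.real (E ∩ Icc (η / 2 * L) L) := by
        rw [Real.volume_real_Icc_of_le (by positivity), sub_zero]
    linarith
  have hsteps : N * ((1 - η / 2) / N * L) = (1 - η / 2) * L := by field_simp
  have hend : η / 2 * L + N * ((1 - η / 2) / N * L) = L := by
    rw [hsteps]
    ring
  have hdense : η / 2 * (N * ((1 - η / 2) / N * L)) ≤
      volume.real (E ∩ Icc (η / 2 * L) (η / 2 * L + N * ((1 - η / 2) / N * L))) := by
    rw [hend, hsteps]
    refine le_trans ?_ hrest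
    gcongr
    exact mul_le_of_le_one_left hL (by linarith)
  obtain ⟨a, ha, haL, hE⟩ := exists_Icc_subset_measureReal_inter_ge (by positivity) hN hdense
  exact ⟨a, ha, haL.trans_eq hend, hE⟩

end PropagationOfSmallness

theorem rpow_one_sub_mul_rpow_le_mul {c x y x' y' θ : ℝ} (hc : 0 < c) (hx : 0 ≤ x) (hy : 0 ≤ y)
    (hx' : 0 ≤ x') (hy' : 0 ≤ y') (hxx' : x ≤ c * x') (hyy' : y ≤ c * y') (hθ : θ ∈ Icc 0 1) :
    x ^ (1 - θ) * y ^ θ ≤ c * (y' ^ θ * x' ^ (1 - θ)) := by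
  have hθ0 : 0 ≤ θ := hθ.1
  have hθ1 : 0 ≤ 1 - θ := sub_nonneg.2 hθ.2
  have hpow : c ^ (1 - θ) * c ^ θ = c := by
    rw [← Real.rpow_add hc, sub_add_cancel, Real.rpow_one]
  calc x ^ (1 - θ) * y ^ θ ≤ (c * x') ^ (1 - θ) * (c * y') ^ θ := by gcongr
    _ = c * (y' ^ θ * x' ^ (1 - θ)) := by
        rw [Real.mul_rpow hc.le hx', Real.mul_rpow hc.le hy', mul_mul_mul_comm, hpow,
          mul_comm (x' ^ (1 - θ))]

theorem setAverage_le_setIntegral_div {α : Type*} [MeasurableSpace α] {μ : Measure α} {f : α → ℝ}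
    {s t : Set α} (hst : s ⊆ t) (hf : IntegrableOn f t μ) (hf0 : 0 ≤ f) {m : ℝ} (hm : 0 < m)
    (hms : m ≤ μ.real s) : ⨍ x in s, f x ∂μ ≤ (∫ x in t, f x ∂μ) / m := by
  rw [setAverage_eq, smul_eq_mul, inv_mul_eq_div]
  exact div_le_div₀ (integral_nonneg hf0)
    (setIntegral_mono_set hf (.of_forall hf0) hst.eventuallyLE) hm hms

theorem one_div_le_exp_div_rpow {L k : ℝ} (hL : 0 < L) (hk : 0 < k) :
    1 / L ≤ Real.exp (1 / k / L ^ k) := by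
  have hlog : -(k * Real.log L) ≤ 1 / L ^ k := by
    rw [← Real.log_rpow hL, ← Real.log_inv, ← one_div]
    exact Real.log_le_self (by positivity)
  rw [← Real.log_le_iff_le_exp (by positivity), one_div, Real.log_inv, div_right_comm,
    le_div_iff₀ hk]
  linarith

theorem exp_div_mul_rpow_mul_one_div_le {c d k L : ℝ} (hc : 0 < c) (hk : 0 < k) (hL : 0 < L) :
    Real.exp (d / (c * L) ^ k) * (1 / L) ≤ Real.exp ((d / c ^ k + 1 / k) / L ^ k) := by
  rw [add_div, Real.exp_add, Real.mul_rpow hc.le hL.le, ← div_div]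
  gcongr
  exact one_div_le_exp_div_rpow hL hk

theorem mul_exp_div_mul_rpow_le_rpow {A Δ θ x ε : ℝ} (hA : 0 < A) (hΔ : 0 < Δ) (hθ : 0 < θ)
    (hx : 0 < x) (hε : 0 ≤ ε) :
    A * Real.exp (Δ / x) * ε ^ θ ≤
      ((A ^ (1 / θ) + Δ / θ) * Real.exp ((A ^ (1 / θ) + Δ / θ) / x) * ε) ^ θ := by
  have hA' : 0 < A ^ (1 / θ) := by positivity
  have hΔ' : 0 < Δ / θ := by positivity
  calc A * Real.exp (Δ / x) * ε ^ θ = (A ^ (1 / θ) * Real.exp (Δ / θ / x) * ε) ^ θ := by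
        rw [Real.mul_rpow (by positivity) hε, Real.mul_rpow hA'.le (by positivity),
          ← Real.exp_mul, ← Real.rpow_mul hA.le, one_div_mul_cancel hθ.ne', Real.rpow_one]
        congr 3
        field_simp
    _ ≤ _ := by
        gcongr <;> linarith

theorem setIntegral_Ioc_inter_preimage_add_right {E : Type*} [NormedAddCommGroup E]
    [NormedSpace ℝ E] (f : ℝ → E) {s : Set ℝ} (hs : MeasurableSet s) {a b : ℝ} (hab : a ≤ b) :
    ∫ t in Ioc 0 (b - a) ∩ (· + a) ⁻¹' s, f (t + a) = ∫ t in a..b, s.indicator f t := by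
  rw [intervalIntegral.integral_of_le hab, setIntegral_indicator hs,
    ← (measurePreserving_add_right volume a).setIntegral_preimage_emb
      (MeasurableEquiv.addRight a).measurableEmbedding f (Ioc a b ∩ s), preimage_inter,
    preimage_add_const_Ioc, sub_self]

theorem measureReal_preimage_add_right_inter_Ioc (s : Set ℝ) (a b : ℝ) :
    volume.real ((· + a) ⁻¹' s ∩ Ioc 0 (b - a)) = volume.real (s ∩ Ioc a b) := by
  rw [measureReal_def, measureReal_def, ← measure_preimage_add_right volume a (s ∩ Ioc a b),
    preimage_inter, preimage_add_const_Ioc, sub_self]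

section GraphBounded

open scoped Topology ContDiff

theorem hasDerivAt_iteratedDeriv_of_contDiffOn {𝕜 F : Type*} [NontriviallyNormedField 𝕜]
    [NormedAddCommGroup F] [NormedSpace 𝕜 F] {f : 𝕜 → F} {s : Set 𝕜} (hs : IsOpen s)
    (hf : ContDiffOn 𝕜 ∞ f s) (m : ℕ) {t : 𝕜} (ht : t ∈ s) :
    HasDerivAt (iteratedDeriv m f) (iteratedDeriv (m + 1) f t) t := by
  have hwithin : DifferentiableAt 𝕜 (iteratedDerivWithin m f s) t :=
    (hf.differentiableOn_iteratedDerivWithin (by exact_mod_cast WithTop.coe_lt_top m)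
      hs.uniqueDiffOn).differentiableAt (hs.mem_nhds ht)
  rw [iteratedDeriv_succ]
  refine (hwithin.congr_of_eventuallyEq ?_).hasDerivAt
  filter_upwards [hs.mem_nhds ht] with r hr using (iteratedDerivWithin_of_isOpen hs hr).symm

theorem hasDerivAt_map_of_norm_map_le {𝕜 X Y U : Type*} [NontriviallyNormedField 𝕜]
    [NormedAddCommGroup X] [NormedSpace 𝕜 X] [NormedAddCommGroup Y] [NormedSpace 𝕜 Y]
    [NormedAddCommGroup U] [NormedSpace 𝕜 U] {D : Submodule 𝕜 X} {A : X →ₗ[𝕜] Y}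
    {B : X →ₗ[𝕜] U} {b : ℝ} (hB : ∀ v ∈ D, ‖B v‖ ≤ b * (‖A v‖ + ‖v‖)) {w : 𝕜 → X} {w' : X}
    {t : 𝕜} (hw : HasDerivAt w w' t) (hAw : HasDerivAt (fun s => A (w s)) (A w') t)
    (hwD : ∀ᶠ s in 𝓝 t, w s ∈ D) (hw'D : w' ∈ D) :
    HasDerivAt (fun s => B (w s)) (B w') t := by
  rw [hasDerivAt_iff_isLittleO] at hw hAw ⊢
  refine (Asymptotics.IsBigO.of_bound' ?_).trans_isLittleO
    ((hAw.norm_left.add hw.norm_left).const_mul_left b)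
  filter_upwards [hwD] with s hs
  have hle := hB _ (D.sub_mem (D.sub_mem hs hwD.self_of_nhds) (D.smul_mem (s - t) hw'D))
  simp only [map_sub, map_smul] at hle
  exact hle.trans (Real.le_norm_self _)

end GraphBounded

section AnalyticSemigroup

open scoped Nat ContDiff Topology

variable {X U : Type*} [NormedAddCommGroup X] [NormedSpace ℝ X] [NormedAddCommGroup U]
  [NormedSpace ℝ U]

/-- A semigroup of growth `M e^{α t}`, analytic in the quantitative sense that the `m`-th derivative
of a unit orbit is at most `(C₀ m / t) ^ m` on `(0, 1]`. Only the values `S t` with `0 ≤ t` are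
meaningful. -/
structure IsAnalyticSemigroup (S : ℝ → X →L[ℝ] X) (M α C₀ : ℝ) : Prop where
  map_zero : S 0 = ContinuousLinearMap.id ℝ X
  map_add : ∀ t s : ℝ, 0 ≤ t → 0 ≤ s → S (t + s) = (S t).comp (S s)
  one_le_bound : 1 ≤ M
  growth_nonneg : 0 ≤ α
  norm_apply_le : ∀ t : ℝ, 0 ≤ t → ∀ x : X, ‖S t x‖ ≤ M * Real.exp (α * t) * ‖x‖
  contDiffOn : ∀ x : X, ContDiffOn ℝ ∞ (S · x) (Ioi 0)
  one_le_const : 1 ≤ C₀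
  norm_iteratedDeriv_le : ∀ (x : X) (m : ℕ) (t : ℝ), 1 ≤ m → 0 < t → t ≤ 1 →
    ‖iteratedDeriv m (S · x) t‖ ≤ (C₀ * m / t) ^ m * ‖x‖

/-- `A` generates the orbits of `S`, and `B` is an observation operator bounded for the graph norm
of `A`. Both are operators with domain `D`, encoded as total linear maps whose values outside `D`
are junk. -/
structure IsGraphBoundedObservation (S : ℝ → X →L[ℝ] X) (D : Submodule ℝ X) (A : X →ₗ[ℝ] X)
    (B : X →ₗ[ℝ] U) (b : ℝ) : Prop where
  iteratedDeriv_mem : ∀ (x : X) (m : ℕ) (t : ℝ), 0 < t → iteratedDeriv m (S · x) t ∈ D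
  map_iteratedDeriv : ∀ (x : X) (m : ℕ) (t : ℝ), 0 < t →
    A (iteratedDeriv m (S · x) t) = iteratedDeriv (m + 1) (S · x) t
  bound_pos : 0 < b
  norm_map_le : ∀ v ∈ D, ‖B v‖ ≤ b * (‖A v‖ + ‖v‖)

/-- Observability from every time interval `[0, L]` with `L ≤ 1`, at cost `e^{d / L ^ k}`. -/
def ObservabilityInequality (S : ℝ → X →L[ℝ] X) (D : Submodule ℝ X) (B : X →ₗ[ℝ] U)
    (d k : ℝ) : Prop :=
  ∀ L : ℝ, 0 < L → L ≤ 1 → ∀ v ∈ D,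
    ‖S L v‖ ^ 2 ≤ Real.exp (d / L ^ k) * ∫ t in (0 : ℝ)..L, ‖B (S t v)‖ ^ 2

variable {S : ℝ → X →L[ℝ] X} {M α C₀ : ℝ} {D : Submodule ℝ X} {A : X →ₗ[ℝ] X} {B : X →ₗ[ℝ] U}
  {b : ℝ}

namespace IsAnalyticSemigroup

theorem apply_apply (hS : IsAnalyticSemigroup S M α C₀) {t s : ℝ} (ht : 0 ≤ t) (hs : 0 ≤ s)
    (x : X) : S t (S s x) = S (t + s) x := by
  rw [hS.map_add t s ht hs, ContinuousLinearMap.comp_apply]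

theorem norm_apply_le_of_le_one (hS : IsAnalyticSemigroup S M α C₀) {t : ℝ} (ht : 0 ≤ t)
    (ht1 : t ≤ 1) (x : X) : ‖S t x‖ ≤ M * Real.exp α * ‖x‖ := by
  have hM : 0 ≤ M := zero_le_one.trans hS.one_le_bound
  refine (hS.norm_apply_le t ht x).trans ?_
  gcongr
  exact mul_le_of_le_one_right hS.growth_nonneg ht1

theorem norm_iteratedDeriv_le_succ_pow (hS : IsAnalyticSemigroup S M α C₀) {m n : ℕ}
    (hmn : m ≤ n + 1) {s t : ℝ} (hs : 0 < s) (hst : s ≤ t) (ht : t ≤ 1) (x : X) :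
    ‖iteratedDeriv m (S · x) t‖ ≤
      M * Real.exp α * (C₀ * (n + 1) / s) ^ (n + 1) * ‖x‖ := by
  have ht0 : 0 < t := hs.trans_le hst
  have hC₀ : 0 ≤ C₀ := zero_le_one.trans hS.one_le_const
  have hMα : 1 ≤ M * Real.exp α :=
    one_le_mul_of_one_le_of_one_le hS.one_le_bound (Real.one_le_exp hS.growth_nonneg)
  have hbase : 1 ≤ C₀ * (n + 1) / s := by
    rw [one_le_div hs]
    nlinarith [hS.one_le_const, (Nat.cast_nonneg n : (0 : ℝ) ≤ n)]
  rcases m.eq_zero_or_pos with rfl | hm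
  · rw [iteratedDeriv_zero]
    refine (hS.norm_apply_le_of_le_one ht0.le ht x).trans ?_
    exact mul_le_mul_of_nonneg_right
      (le_mul_of_one_le_right (zero_le_one.trans hMα) (one_le_pow₀ hbase)) (norm_nonneg x)
  calc ‖iteratedDeriv m (S · x) t‖ ≤ (C₀ * m / t) ^ m * ‖x‖ :=
        hS.norm_iteratedDeriv_le x m t hm ht0 ht
    _ ≤ (C₀ * (n + 1) / s) ^ m * ‖x‖ := by
        gcongr
        exact_mod_cast hmn
    _ ≤ M * Real.exp α * (C₀ * (n + 1) / s) ^ (n + 1) * ‖x‖ := by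
        gcongr
        exact (pow_le_pow_right₀ hbase hmn).trans (le_mul_of_one_le_left (by positivity) hMα)

end IsAnalyticSemigroup

theorem succ_pow_succ_le_exp_pow_mul_two_pow_mul_factorial (n : ℕ) :
    ((n : ℝ) + 1) ^ (n + 1) ≤ Real.exp 1 ^ (n + 1) * 2 ^ n * n ! := calc
  ((n : ℝ) + 1) ^ (n + 1) ≤ Real.exp 1 ^ (n + 1) * (n + 1)! := by
      rw [← div_le_iff₀ (by positivity), Real.exp_one_pow, Nat.cast_succ]
      exact Real.pow_div_factorial_le_exp _ (by positivity) (n + 1)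
  _ = Real.exp 1 ^ (n + 1) * (n + 1 : ℕ) * n ! := by
      rw [Nat.factorial_succ]
      push_cast
      ring
  _ ≤ Real.exp 1 ^ (n + 1) * 2 ^ n * n ! := by
      gcongr
      exact_mod_cast Nat.lt_two_pow_self

namespace IsGraphBoundedObservation

theorem apply_mem (hB : IsGraphBoundedObservation S D A B b) {t : ℝ} (ht : 0 < t) (x : X) :
    S t x ∈ D := by
  simpa using hB.iteratedDeriv_mem x 0 t ht

theorem apply_mem_of_nonneg (hB : IsGraphBoundedObservation S D A B b)
    (hS : IsAnalyticSemigroup S M α C₀) {t : ℝ} (ht : 0 ≤ t) {v : X} (hv : v ∈ D) : S t v ∈ D := by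
  rcases ht.eq_or_lt with rfl | ht
  · rwa [hS.map_zero]
  · exact hB.apply_mem ht v

theorem hasDerivAt (hB : IsGraphBoundedObservation S D A B b) (hS : IsAnalyticSemigroup S M α C₀)
    (x : X) (m : ℕ) {t : ℝ} (ht : 0 < t) :
    HasDerivAt (fun s => B (iteratedDeriv m (S · x) s)) (B (iteratedDeriv (m + 1) (S · x) t))
      t := by
  have hu : ∀ m, HasDerivAt (iteratedDeriv m (S · x)) (iteratedDeriv (m + 1) (S · x) t) t :=
    fun m => hasDerivAt_iteratedDeriv_of_contDiffOn isOpen_Ioi (hS.contDiffOn x) m ht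
  have hpos : ∀ᶠ s in 𝓝 t, 0 < s := Ioi_mem_nhds ht
  refine hasDerivAt_map_of_norm_map_le hB.norm_map_le (hu m) ?_
    (hpos.mono fun s hs => hB.iteratedDeriv_mem x m s hs) (hB.iteratedDeriv_mem x (m + 1) t ht)
  rw [hB.map_iteratedDeriv x (m + 1) t ht]
  exact (hu (m + 1)).congr_of_eventuallyEq (hpos.mono fun s hs => hB.map_iteratedDeriv x m s hs)

theorem iteratedDeriv_map (hB : IsGraphBoundedObservation S D A B b)
    (hS : IsAnalyticSemigroup S M α C₀) (x : X) (n : ℕ) {t : ℝ} (ht : 0 < t) :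
    iteratedDeriv n (fun s => B (S s x)) t = B (iteratedDeriv n (S · x) t) := by
  induction n generalizing t with
  | zero => simp
  | succ n ih =>
    rw [iteratedDeriv_succ, ← (hB.hasDerivAt hS x n ht).deriv]
    refine Filter.EventuallyEq.deriv_eq ?_
    filter_upwards [Ioi_mem_nhds ht] with s hs using ih hs

theorem contDiffOn_map (hB : IsGraphBoundedObservation S D A B b)
    (hS : IsAnalyticSemigroup S M α C₀) (x : X) :
    ContDiffOn ℝ ∞ (fun s => B (S s x)) (Ioi 0) := by
  refine contDiffOn_of_differentiableOn_deriv fun m _ => ?_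
  refine DifferentiableOn.congr
    (fun t ht => (hB.hasDerivAt hS x m ht).differentiableAt.differentiableWithinAt) fun t ht => ?_
  rw [iteratedDerivWithin_of_isOpen isOpen_Ioi ht, hB.iteratedDeriv_map hS x m ht]

theorem norm_map_iteratedDeriv_le (hB : IsGraphBoundedObservation S D A B b)
    (hS : IsAnalyticSemigroup S M α C₀) {s t : ℝ} (hs : 0 < s) (hst : s ≤ t) (ht : t ≤ 1) (x : X)
    (n : ℕ) :
    ‖B (iteratedDeriv n (S · x) t)‖ ≤
      2 * Real.exp 1 * b * C₀ * M * Real.exp α / s * ‖x‖ * n ! /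
        (s / (2 * Real.exp 1 * C₀)) ^ n := by
  have ht0 : 0 < t := hs.trans_le hst
  have hb : 0 < b := hB.bound_pos
  have hM : 0 < M := zero_lt_one.trans_le hS.one_le_bound
  have hC₀ : 0 < C₀ := zero_lt_one.trans_le hS.one_le_const
  calc ‖B (iteratedDeriv n (S · x) t)‖
      ≤ b * (‖iteratedDeriv (n + 1) (S · x) t‖ + ‖iteratedDeriv n (S · x) t‖) := by
        simpa [hB.map_iteratedDeriv x n t ht0] using
          hB.norm_map_le _ (hB.iteratedDeriv_mem x n t ht0)
    _ ≤ b * (M * Real.exp α * (C₀ * (n + 1) / s) ^ (n + 1) * ‖x‖ +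
          M * Real.exp α * (C₀ * (n + 1) / s) ^ (n + 1) * ‖x‖) := by
        gcongr
        · exact hS.norm_iteratedDeriv_le_succ_pow le_rfl hs hst ht x
        · exact hS.norm_iteratedDeriv_le_succ_pow n.le_succ hs hst ht x
    _ = 2 * b * (M * Real.exp α) * (C₀ / s) ^ (n + 1) * ‖x‖ * ((n : ℝ) + 1) ^ (n + 1) := by
        rw [mul_div_right_comm, mul_pow]
        ring
    _ ≤ 2 * b * (M * Real.exp α) * (C₀ / s) ^ (n + 1) * ‖x‖ *
          (Real.exp 1 ^ (n + 1) * 2 ^ n * n !) := by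
        gcongr
        exact succ_pow_succ_le_exp_pow_mul_two_pow_mul_factorial n
    _ = 2 * Real.exp 1 * b * C₀ * M * Real.exp α / s * ‖x‖ * n ! /
          (s / (2 * Real.exp 1 * C₀)) ^ n := by
        simp only [div_pow, mul_pow, pow_succ]
        field_simp

theorem hasCauchyEstimatesOn (hB : IsGraphBoundedObservation S D A B b)
    (hS : IsAnalyticSemigroup S M α C₀) {a c : ℝ} (ha : 0 < a) (hac : a < c) (hc : c ≤ 1) (x : X) :
    HasCauchyEstimatesOn (fun t => B (S t x))
      (2 * Real.exp 1 * b * C₀ * M * Real.exp α / a * ‖x‖) (a / (2 * Real.exp 1 * C₀))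
      (Icc a c) where
  contDiffOn := (hB.contDiffOn_map hS x).mono fun _ ht => ha.trans_le ht.1
  norm_iteratedDerivWithin_le n t ht := by
    have ht0 : 0 < t := ha.trans_le ht.1
    have hsmooth : ContDiffAt ℝ n (fun s => B (S s x)) t :=
      ((hB.contDiffOn_map hS x).contDiffAt (Ioi_mem_nhds ht0)).of_le (by exact_mod_cast le_top)
    rw [iteratedDerivWithin_eq_iteratedDeriv (uniqueDiffOn_Icc hac) hsmooth ht,
      hB.iteratedDeriv_map hS x n ht0]
    exact hB.norm_map_iteratedDeriv_le hS ha ht.1 (ht.2.trans hc) x n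

end IsGraphBoundedObservation

namespace ObservabilityInequality

variable {d k : ℝ}

theorem norm_apply_le_of_norm_observation_le (hobs : ObservabilityInequality S D B d k)
    (hd : 0 ≤ d) {r : ℝ} (hr : 0 < r) (hr1 : r ≤ 1) {v : X} (hv : v ∈ D) {y : ℝ}
    (hy : ∀ t ∈ Icc 0 r, ‖B (S t v)‖ ≤ y) : ‖S r v‖ ≤ Real.exp (d / r ^ k) * y := by
  have hy0 : 0 ≤ y := (norm_nonneg _).trans (hy 0 (left_mem_Icc.2 hr.le))
  have hbound : ∀ t ∈ uIoc 0 r, ‖‖B (S t v)‖ ^ 2‖ ≤ y ^ 2 := fun t ht => by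
    rw [uIoc_of_le hr.le] at ht
    rw [norm_pow, norm_norm]
    exact pow_le_pow_left₀ (norm_nonneg _) (hy t (Ioc_subset_Icc_self ht)) 2
  have h_int : ∫ t in (0 : ℝ)..r, ‖B (S t v)‖ ^ 2 ≤ y ^ 2 := calc
    ∫ t in (0 : ℝ)..r, ‖B (S t v)‖ ^ 2 ≤ y ^ 2 * |r - 0| :=
        (Real.le_norm_self _).trans (intervalIntegral.norm_integral_le_of_norm_le_const hbound)
    _ ≤ y ^ 2 := by
        rw [sub_zero, abs_of_pos hr]
        exact mul_le_of_le_one_right (by positivity) hr1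
  have hexp : 1 ≤ Real.exp (d / r ^ k) := Real.one_le_exp (by positivity)
  refine (sq_le_sq₀ (norm_nonneg _) (by positivity)).1 ?_
  calc ‖S r v‖ ^ 2 ≤ Real.exp (d / r ^ k) * y ^ 2 := (hobs r hr hr1 v hv).trans (by gcongr)
    _ ≤ (Real.exp (d / r ^ k) * y) ^ 2 := by
        rw [mul_pow]
        gcongr
        exact le_self_pow₀ hexp two_ne_zero

theorem norm_apply_le_of_norm_observation_le_on_Icc (hobs : ObservabilityInequality S D B d k)
    (hS : IsAnalyticSemigroup S M α C₀) (hB : IsGraphBoundedObservation S D A B b) (hd : 0 ≤ d)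
    {a c L : ℝ} (ha : 0 < a) (hac : a < c) (hcL : c ≤ L) (hL : L ≤ 1) {x : X} {y : ℝ}
    (hy : ∀ t ∈ Icc a c, ‖B (S t x)‖ ≤ y) :
    ‖S L x‖ ≤ M * Real.exp α * (Real.exp (d / (c - a) ^ k) * y) := by
  have hM : 0 ≤ M := zero_le_one.trans hS.one_le_bound
  have hc : ‖S (c - a) (S a x)‖ ≤ Real.exp (d / (c - a) ^ k) * y := by
    refine hobs.norm_apply_le_of_norm_observation_le hd (sub_pos.2 hac) (by linarith)
      (hB.apply_mem ha x) fun t ht => ?_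
    rw [hS.apply_apply ht.1 ha.le]
    exact hy _ ⟨by linarith [ht.1], by linarith [ht.2]⟩
  calc ‖S L x‖ = ‖S (L - c) (S (c - a) (S a x))‖ := by
        rw [hS.apply_apply (sub_nonneg.2 hac.le) ha.le, sub_add_cancel,
          hS.apply_apply (sub_nonneg.2 hcL) (ha.trans hac).le, sub_add_cancel]
    _ ≤ M * Real.exp α * ‖S (c - a) (S a x)‖ :=
        hS.norm_apply_le_of_le_one (by linarith) (by linarith) _
    _ ≤ M * Real.exp α * (Real.exp (d / (c - a) ^ k) * y) := by gcongr

theorem apply_eq_zero_or_integrableOn (hobs : ObservabilityInequality S D B d k)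
    (hS : IsAnalyticSemigroup S M α C₀) (hB : IsGraphBoundedObservation S D A B b)
    {L : ℝ} (hL : 0 < L) (hL1 : L ≤ 1) {v : X} (hv : v ∈ D) :
    S L v = 0 ∨ IntegrableOn (fun t => ‖B (S t v)‖) (Ioc 0 L) := by
  by_cases hsq : IntervalIntegrable (fun t => ‖B (S t v)‖ ^ 2) volume 0 L
  · have hone : IntervalIntegrable (fun _ => (1 : ℝ)) volume 0 L := intervalIntegrable_const
    refine .inr (Integrable.mono' ((intervalIntegrable_iff_integrableOn_Ioc_of_le hL.le).1
      (hone.add hsq)) ?_ (.of_forall fun t => ?_))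
    · exact ((hB.contDiffOn_map hS v).continuousOn.norm.mono Ioc_subset_Ioi_self)
        |>.aestronglyMeasurable measurableSet_Ioc
    · rw [norm_norm]
      nlinarith [sq_nonneg (‖B (S t v)‖ - 1)]
  · -- The Bochner integral of a non-integrable function is `0`.
    have hle := hobs L hL hL1 v hv
    rw [intervalIntegral.integral_undef hsq, mul_zero] at hle
    exact .inl (norm_eq_zero.1 (pow_eq_zero_iff two_ne_zero |>.1
      (hle.antisymm (by positivity))))

theorem norm_apply_le_of_setAverage_observation (hobs : ObservabilityInequality S D B d k)
    (hS : IsAnalyticSemigroup S M α C₀) (hB : IsGraphBoundedObservation S D A B b) (hd : 0 ≤ d)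
    {a c L δ : ℝ} (ha : 0 < a) (hac : a < c) (hcL : c ≤ L) (hL : L ≤ 1) (hδ : δ ∈ Ioc 0 1)
    (hlen : 64 * Real.exp 1 ^ 2 * C₀ * (c - a) ≤ δ * a) {G : Set ℝ} (hGm : MeasurableSet G)
    (hG : G ⊆ Icc a c) (hGδ : δ * (c - a) ≤ volume.real G) (x : X) :
    ‖S L x‖ ≤ M * Real.exp α * (Real.exp (d / (c - a) ^ k) *
      (4 * ((2 * Real.exp 1 * b * C₀ * M * Real.exp α / a * ‖x‖) ^ (1 - smallnessExponent (δ / 2)) *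
        (2 * ⨍ t in G, ‖B (S t x)‖) ^ smallnessExponent (δ / 2)))) := by
  have hC₀ : 0 < C₀ := zero_lt_one.trans_le hS.one_le_const
  refine hobs.norm_apply_le_of_norm_observation_le_on_Icc hS hB hd ha hac hcL hL fun t ht => ?_
  refine (hB.hasCauchyEstimatesOn hS ha hac (hcL.trans hL) x).norm_le_of_setAverage hac
    (by positivity) hδ ?_ hGm hG hGδ ht
  rw [← mul_div_assoc, le_div_iff₀ (by positivity)]
  linarith

theorem norm_apply_le_mul_setIntegral_rpow (hobs : ObservabilityInequality S D B d k)
    (hS : IsAnalyticSemigroup S M α C₀) (hB : IsGraphBoundedObservation S D A B b) (hd : 0 ≤ d)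
    {a r L δ : ℝ} (ha : 0 < a) (hr : 0 < r) (hrL : a + r ≤ L) (hL : L ≤ 1) (hδ : δ ∈ Ioc 0 1)
    (hlen : 64 * Real.exp 1 ^ 2 * C₀ * r ≤ δ * a) {E : Set ℝ} (hE : MeasurableSet E)
    (hEδ : δ * r ≤ volume.real (E ∩ Icc a (a + r))) {Q : ℝ}
    (hQ : 2 * Real.exp 1 * b * C₀ * M * Real.exp α / a ≤ Q) (hQ' : 2 / (δ * r) ≤ Q) {x : X}
    (h_int : IntegrableOn (fun t => ‖B (S t x)‖) (Ioc 0 L)) :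
    ‖S L x‖ ≤ 4 * M * Real.exp α * Real.exp (d / r ^ k) * Q *
      ((∫ t in Ioc 0 L ∩ E, ‖B (S t x)‖) ^ smallnessExponent (δ / 2) *
        ‖x‖ ^ (1 - smallnessExponent (δ / 2))) := by
  have hsub : E ∩ Icc a (a + r) ⊆ Ioc 0 L ∩ E := fun t ⟨htE, ht⟩ =>
    ⟨⟨ha.trans_le ht.1, ht.2.trans hrL⟩, htE⟩
  have hδr : 0 < δ * r := mul_pos hδ.1 hr
  have hQ0 : 0 < Q := lt_of_lt_of_le (by positivity) hQ'
  have hM : 0 < M := zero_lt_one.trans_le hS.one_le_bound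
  have hC₀ : 0 < C₀ := zero_lt_one.trans_le hS.one_le_const
  have hb : 0 < b := hB.bound_pos
  set ε := ∫ t in Ioc 0 L ∩ E, ‖B (S t x)‖
  have hε : 0 ≤ ε := integral_nonneg fun _ => norm_nonneg _
  have haverage0 : 0 ≤ 2 * ⨍ t in E ∩ Icc a (a + r), ‖B (S t x)‖ :=
    mul_nonneg zero_le_two (integral_nonneg fun _ => norm_nonneg _)
  have haverage : 2 * ⨍ t in E ∩ Icc a (a + r), ‖B (S t x)‖ ≤ Q * ε := calc
    2 * ⨍ t in E ∩ Icc a (a + r), ‖B (S t x)‖ ≤ 2 * (ε / (δ * r)) := by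
        gcongr
        exact setAverage_le_setIntegral_div hsub (h_int.mono_set inter_subset_left)
          (fun _ => norm_nonneg _) hδr hEδ
    _ = 2 / (δ * r) * ε := by ring
    _ ≤ Q * ε := by gcongr
  have hinterp := rpow_one_sub_mul_rpow_le_mul hQ0 (by positivity)
    haverage0 (norm_nonneg x) hε
    (mul_le_mul_of_nonneg_right hQ (norm_nonneg x)) haverage
    (Ioo_subset_Icc_self
      (smallnessExponent_mem_Ioo ⟨half_pos hδ.1, (half_le_self hδ.1.le).trans hδ.2⟩))
  have hobserved := hobs.norm_apply_le_of_setAverage_observation hS hB hd ha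
    (lt_add_of_pos_right a hr) hrL hL hδ (by rwa [add_sub_cancel_left])
    (hE.inter measurableSet_Icc) inter_subset_right (by rwa [add_sub_cancel_left]) x
  rw [add_sub_cancel_left] at hobserved
  calc ‖S L x‖ ≤ _ := hobserved
    _ ≤ M * Real.exp α * (Real.exp (d / r ^ k) *
          (4 * (Q * (ε ^ smallnessExponent (δ / 2) * ‖x‖ ^ (1 - smallnessExponent (δ / 2)))))) := by
        gcongr
    _ = _ := by ring

theorem norm_apply_le_exp_mul_rpow_of_dense_Icc (hobs : ObservabilityInequality S D B d k)
    (hS : IsAnalyticSemigroup S M α C₀) (hB : IsGraphBoundedObservation S D A B b) (hd : 0 ≤ d)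
    (hk : 0 < k) {a c L δ : ℝ} (hc : 0 < c) (hδ : δ ∈ Ioc 0 1)
    (hcδ : 64 * Real.exp 1 ^ 2 * C₀ * c ≤ δ ^ 2) (hL : 0 < L) (hL1 : L ≤ 1) (hδa : δ * L ≤ a)
    (haL : a + c * L ≤ L) {E : Set ℝ} (hE : MeasurableSet E)
    (hdense : δ * (c * L) ≤ volume.real (E ∩ Icc a (a + c * L))) {x : X}
    (h_int : IntegrableOn (fun t => ‖B (S t x)‖) (Ioc 0 L)) :
    ‖S L x‖ ≤
      4 * M * Real.exp α * (2 * Real.exp 1 * b * C₀ * M * Real.exp α / δ + 2 / (δ * c)) *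
        Real.exp ((d / c ^ k + 1 / k) / L ^ k) *
        (∫ t in Ioc 0 L ∩ E, ‖B (S t x)‖) ^ smallnessExponent (δ / 2) *
        ‖x‖ ^ (1 - smallnessExponent (δ / 2)) := by
  have hδ0 : 0 < δ := hδ.1
  have hM : 0 < M := zero_lt_one.trans_le hS.one_le_bound
  have hC₀ : 0 < C₀ := zero_lt_one.trans_le hS.one_le_const
  have hb : 0 < b := hB.bound_pos
  have hlen : 64 * Real.exp 1 ^ 2 * C₀ * (c * L) ≤ δ * a := calc
    64 * Real.exp 1 ^ 2 * C₀ * (c * L) = 64 * Real.exp 1 ^ 2 * C₀ * c * L := by ring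
    _ ≤ δ ^ 2 * L := by gcongr
    _ = δ * (δ * L) := by ring
    _ ≤ δ * a := by gcongr
  set P := 2 * Real.exp 1 * b * C₀ * M * Real.exp α
  have hcauchy : P / a ≤ (P / δ + 2 / (δ * c)) / L := calc
    P / a ≤ P / (δ * L) := by gcongr
    _ = P / δ / L := by rw [div_div]
    _ ≤ (P / δ + 2 / (δ * c)) / L := by
        gcongr
        exact le_add_of_nonneg_right (by positivity)
  have hdensity : 2 / (δ * (c * L)) ≤ (P / δ + 2 / (δ * c)) / L := by
    rw [← mul_assoc, ← div_div]
    gcongr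
    exact le_add_of_nonneg_left (by positivity)
  have hbound := hobs.norm_apply_le_mul_setIntegral_rpow hS hB hd
    ((mul_pos hδ0 hL).trans_le hδa) (by positivity) haL hL1 hδ hlen hE hdense hcauchy hdensity h_int
  set θ := smallnessExponent (δ / 2)
  set ε := ∫ t in Ioc 0 L ∩ E, ‖B (S t x)‖
  calc ‖S L x‖ ≤ _ := hbound
    _ = 4 * M * Real.exp α * (P / δ + 2 / (δ * c)) * (Real.exp (d / (c * L) ^ k) * (1 / L)) *
          ε ^ θ * ‖x‖ ^ (1 - θ) := by ring
    _ ≤ _ := by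
        gcongr
        exact exp_div_mul_rpow_mul_one_div_le hc hk hL

theorem exists_norm_apply_le_exp_mul_rpow (hobs : ObservabilityInequality S D B d k)
    (hS : IsAnalyticSemigroup S M α C₀) (hB : IsGraphBoundedObservation S D A B b) (hd : 0 < d)
    (hk : 0 < k) {η : ℝ} (hη : η ∈ Ioo 0 1) :
    ∃ K > 0, ∃ Δ > 0, ∃ θ ∈ Ioo (0 : ℝ) 1, ∀ L : ℝ, 0 < L → L ≤ 1 → ∀ E : Set ℝ,
      MeasurableSet E → η * L ≤ volume.real (E ∩ Ioc 0 L) → ∀ v ∈ D,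
        ‖S L v‖ ≤ K * Real.exp (Δ / L ^ k) * (∫ t in Ioc 0 L ∩ E, ‖B (S t v)‖) ^ θ *
          ‖v‖ ^ (1 - θ) := by
  have hη0 : 0 < η := hη.1
  have hη1 : η < 1 := hη.2
  have hM : 0 < M := zero_lt_one.trans_le hS.one_le_bound
  have hC₀ : 0 < C₀ := zero_lt_one.trans_le hS.one_le_const
  have hb : 0 < b := hB.bound_pos
  obtain ⟨c, ⟨hc, hcη⟩, hdense⟩ := exists_pos_le_forall_exists_Icc_measureReal_inter_ge hη
    (by positivity : 0 < (η / 2) ^ 2 / (64 * Real.exp 1 ^ 2 * C₀))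
  have hcη : 64 * Real.exp 1 ^ 2 * C₀ * c ≤ (η / 2) ^ 2 := (le_div_iff₀' (by positivity)).1 hcη
  refine ⟨4 * M * Real.exp α *
      (2 * Real.exp 1 * b * C₀ * M * Real.exp α / (η / 2) + 2 / (η / 2 * c)), by positivity,
    d / c ^ k + 1 / k, by positivity, smallnessExponent (η / 2 / 2),
    smallnessExponent_mem_Ioo ⟨by positivity, by linarith⟩, fun L hL hL1 E hE hηE v hv => ?_⟩
  rcases hobs.apply_eq_zero_or_integrableOn hS hB hL hL1 hv with hzero | h_int
  · rw [hzero, norm_zero]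
    positivity
  obtain ⟨a, hηa, haL, hdense⟩ := hdense L hL.le E hηE
  exact hobs.norm_apply_le_exp_mul_rpow_of_dense_Icc hS hB hd.le hk hc ⟨half_pos hη0, by linarith⟩
    hcη hL hL1 hηa haL hE hdense h_int

end ObservabilityInequality

end AnalyticSemigroup

theorem interpolation_inequality_from_measurable_sets_general {X U : Type*}
    [NormedAddCommGroup X] [NormedSpace ℝ X] [NormedAddCommGroup U] [NormedSpace ℝ U]
    {S : ℝ → X →L[ℝ] X} {M α C₀ : ℝ} (hS : IsAnalyticSemigroup S M α C₀) {D : Submodule ℝ X}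
    {A : X →ₗ[ℝ] X} {B : X →ₗ[ℝ] U} {b : ℝ} (hB : IsGraphBoundedObservation S D A B b) {d k : ℝ}
    (hd : 0 < d) (hk : 0 < k) (hobs : ObservabilityInequality S D B d k) {η : ℝ}
    (hη : η ∈ Ioo 0 1) :
    ∃ C > (0 : ℝ), ∃ θ ∈ Ioo (0 : ℝ) 1, ∀ t₁ t₂ : ℝ, 0 ≤ t₁ → t₁ < t₂ → t₂ - t₁ ≤ 1 →
      ∀ E : Set ℝ, MeasurableSet E → ENNReal.ofReal (η * (t₂ - t₁)) ≤ volume (E ∩ Ioo t₁ t₂) →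
        ∀ u₀ ∈ D, ‖S t₂ u₀‖ ≤
          (C * Real.exp (C / (t₂ - t₁) ^ k) *
            ∫ t in t₁..t₂, E.indicator (fun t => ‖B (S t u₀)‖) t) ^ θ * ‖S t₁ u₀‖ ^ (1 - θ) := by
  obtain ⟨K, hK, Δ, hΔ, θ, hθ, hinterp⟩ := hobs.exists_norm_apply_le_exp_mul_rpow hS hB hd hk hη
  refine ⟨K ^ (1 / θ) + Δ / θ, add_pos (by positivity) (div_pos hΔ hθ.1), θ, hθ,
    fun t₁ t₂ ht₁ ht hlen E hE hηE u₀ hu₀ => ?_⟩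
  have hL : 0 < t₂ - t₁ := sub_pos.2 ht
  have hdense : η * (t₂ - t₁) ≤ volume.real ((· + t₁) ⁻¹' E ∩ Ioc 0 (t₂ - t₁)) := by
    rw [measureReal_preimage_add_right_inter_Ioc]
    exact (ENNReal.ofReal_le_iff_le_toReal (measure_ne_top_of_subset inter_subset_right
      (by simp))).1 (hηE.trans (by gcongr; exact Ioo_subset_Ioc_self))
  have hle := hinterp (t₂ - t₁) hL hlen _ (hE.preimage (measurable_add_const t₁)) hdense
    (S t₁ u₀) (hB.apply_mem_of_nonneg hS ht₁ hu₀)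
  rw [hS.apply_apply hL.le ht₁, sub_add_cancel, setIntegral_congr_fun
    (measurableSet_Ioc.inter (hE.preimage (measurable_add_const t₁)))
    fun t ht => by rw [hS.apply_apply ht.1.1.le ht₁],
    setIntegral_Ioc_inter_preimage_add_right (fun t => ‖B (S t u₀)‖) hE ht.le] at hle
  refine hle.trans ?_
  gcongr
  exact mul_exp_div_mul_rpow_le_rpow hK hΔ hθ.1 (by positivity)
    (intervalIntegral.integral_nonneg ht.le fun _ _ =>
      indicator_nonneg (fun _ _ => norm_nonneg _) _)

/-- **Interpolation inequality on a short time interval from a measurable set.**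
Assuming the observability inequality from time intervals, for each `η ∈ (0,1)` there
exist `C > 0` and `θ ∈ (0,1)` such that for all `0 ≤ t₁ < t₂` with `t₂ - t₁ ≤ 1` and every
measurable `E ⊆ [t₁,t₂]` with `|E ∩ (t₁,t₂)| ≥ η (t₂ - t₁)`, every `u₀ ∈ D` satisfies
`‖u(t₂)‖ ≤ (C e^{C/(t₂-t₁)^k} ∫_{t₁}^{t₂} χ_E ‖B u(t)‖ dt)^θ ‖u(t₁)‖^{1-θ}`. -/
theorem interpolation_inequality_from_measurable_sets
    {X U : Type*}
    [NormedAddCommGroup X] [InnerProductSpace ℝ X] [CompleteSpace X]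
    [NormedAddCommGroup U] [InnerProductSpace ℝ U] [CompleteSpace U]
    (S : ℝ → X →L[ℝ] X)
    (hS0 : S 0 = ContinuousLinearMap.id ℝ X)
    (hSsemi : ∀ t s : ℝ, 0 ≤ t → 0 ≤ s → S (t + s) = (S t).comp (S s))
    (hScont : ∀ x : X, ContinuousOn (fun t => S t x) (Set.Ici 0))
    (M α : ℝ) (hM : 1 ≤ M) (hα : 0 ≤ α)
    (hSbound : ∀ t : ℝ, 0 ≤ t → ∀ x : X, ‖S t x‖ ≤ M * Real.exp (α * t) * ‖x‖)
    (hSsmooth : ∀ x : X, ContDiffOn ℝ (⊤ : ℕ∞) (fun s => S s x) (Set.Ioi 0))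
    (C₀ : ℝ) (hC₀ : 1 ≤ C₀)
    (hSderiv : ∀ (x : X) (m : ℕ) (t : ℝ), 1 ≤ m → 0 < t → t ≤ 1 →
      ‖iteratedDeriv m (fun s => S s x) t‖ ≤ (C₀ * m / t) ^ m * ‖x‖)
    (D : Submodule ℝ X) (A : X →ₗ[ℝ] X) (B : X →ₗ[ℝ] U)
    (hD : ∀ (x : X) (m : ℕ) (t : ℝ), 0 < t → iteratedDeriv m (fun s => S s x) t ∈ D)
    (hA : ∀ (x : X) (m : ℕ) (t : ℝ), 0 < t →
      A (iteratedDeriv m (fun s => S s x) t) = iteratedDeriv (m + 1) (fun s => S s x) t)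
    (b : ℝ) (hb : 0 < b)
    (hB : ∀ v ∈ D, ‖B v‖ ≤ b * (‖A v‖ + ‖v‖))
    -- observability inequality from time intervals
    (d k : ℝ) (hd : 0 < d) (hk : 0 < k)
    (hobs : ∀ L : ℝ, 0 < L → L ≤ 1 → ∀ u₀ ∈ D,
      ‖S L u₀‖ ^ 2 ≤ Real.exp (d / L ^ k) * ∫ t in (0:ℝ)..L, ‖B (S t u₀)‖ ^ 2)
    (η : ℝ) (hη : η ∈ Set.Ioo (0:ℝ) 1) :
    ∃ C > (0:ℝ), ∃ θ ∈ Set.Ioo (0:ℝ) 1,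
      ∀ t₁ t₂ : ℝ, 0 ≤ t₁ → t₁ < t₂ → t₂ - t₁ ≤ 1 →
        ∀ E : Set ℝ, MeasurableSet E → E ⊆ Set.Icc t₁ t₂ →
          ENNReal.ofReal (η * (t₂ - t₁)) ≤ volume (E ∩ Set.Ioo t₁ t₂) →
          ∀ u₀ ∈ D,
            ‖S t₂ u₀‖ ≤
              (C * Real.exp (C / (t₂ - t₁) ^ k) *
                  ∫ t in t₁..t₂, E.indicator (fun t => ‖B (S t u₀)‖) t) ^ θ
                * ‖S t₁ u₀‖ ^ (1 - θ) := by
  have hS : IsAnalyticSemigroup S M α C₀ := ⟨hS0, hSsemi, hM, hα, hSbound, hSsmooth, hC₀, hSderiv⟩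
  obtain ⟨C, hC, θ, hθ, hinterp⟩ := interpolation_inequality_from_measurable_sets_general hS
    ⟨hD, hA, hb, hB⟩ hd hk hobs hη
  exact ⟨C, hC, θ, hθ, fun t₁ t₂ ht₁ ht hlen E hE _ => hinterp t₁ t₂ ht₁ ht hlen E hE⟩
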